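/- (Theorem of Papadakis–Petrotou for the simplex boundary, base determinant identity) Let A = (a_{i,j}) be the n×(n+1) matrix of indeterminates over 𝔽_2, X_j the maximal minor deleting column j, I = (i_1,…,i_n) and J a list of column indices with |J| odd. If there exists a vector L of column indices with X_I X_J = X_L² · X_0 X_1 ⋯ X_n, then ∂_I X_J = X_L², where ∂_I = ∂_{a_{1,i_1}} ∂_{a_{2,i_2}} ⋯ ∂_{a_{n,i_n}}; otherwise ∂_I X_J = 0. -/

import Mathlib

open MvPolynomial

/-- The generic `n × (n+1)` matrix of indeterminates over `𝔽₂`. -/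
noncomputable def genMat15 (n : ℕ) :
    Matrix (Fin n) (Fin (n + 1)) (MvPolynomial (Fin n × Fin (n + 1)) (ZMod 2)) :=
  fun i j => X (i, j)

/-- `Xdet15 n j`: the maximal minor of the generic matrix with column `j` deleted. -/
noncomputable def Xdet15 (n : ℕ) (j : Fin (n + 1)) :
    MvPolynomial (Fin n × Fin (n + 1)) (ZMod 2) :=
  ((genMat15 n).submatrix id j.succAbove).det

/-- Product of minors indexed by a multiset of column indices. -/
noncomputable def XProd15 (n : ℕ) (J : Multiset (Fin (n + 1))) :
    MvPolynomial (Fin n × Fin (n + 1)) (ZMod 2) :=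
  (J.map (Xdet15 n)).prod

/-- The iterated derivative `∂_I = ∂_{a_{1,i_1}} ⋯ ∂_{a_{n,i_n}}`: one formal partial
derivative from each row, in the column positions given by `I`. -/
noncomputable def pderivI15 (n : ℕ) (I : Fin n → Fin (n + 1))
    (f : MvPolynomial (Fin n × Fin (n + 1)) (ZMod 2)) :
    MvPolynomial (Fin n × Fin (n + 1)) (ZMod 2) :=
  (List.ofFn fun r : Fin n => ((r, I r) : Fin n × Fin (n + 1))).foldr
    (fun v g => pderiv v g) f

lemma perm_expand15 {S : Type*} [CommRing S] [CharP S 2] (n : ℕ)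
    (A : Matrix (Fin n) (Fin (n + 1)) S) (u : Fin (n + 1) → S) (hu : ∀ j, u j * u j = 0) :
    ∏ r, ∑ j, A r j * u j =
      ∑ k : Fin (n + 1), (A.submatrix id k.succAbove).det * ∏ i, u (k.succAbove i) := by
  rw [Finset.prod_univ_sum, Fintype.piFinset_univ]
  have h1 : ∀ k : Fin (n + 1), (A.submatrix id k.succAbove).det * ∏ i, u (k.succAbove i) =
      ∑ σ : Equiv.Perm (Fin n), ∏ r, A r (k.succAbove (σ r)) * u (k.succAbove (σ r)) := by
    intro k
    rw [← Matrix.det_transpose, Matrix.det_apply, Finset.sum_mul]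
    refine Finset.sum_congr rfl fun σ _ => ?_
    rw [Finset.prod_mul_distrib, Equiv.prod_comp σ (fun i => u (k.succAbove i))]
    congr 1
    rcases Int.units_eq_one_or (Equiv.Perm.sign σ) with h | h
    · simp [h]
    · simp [h, CharTwo.neg_eq]
  simp_rw [h1]
  rw [← Fintype.sum_prod_type'
    (f := fun (k : Fin (n + 1)) (σ : Equiv.Perm (Fin n)) =>
      ∏ r, A r (k.succAbove (σ r)) * u (k.succAbove (σ r)))]
  symm
  refine Fintype.sum_of_injective
    (fun p : Fin (n + 1) × Equiv.Perm (Fin n) => fun r => p.1.succAbove (p.2 r)) ?_ _ _ ?_ ?_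
  · rintro ⟨k, σ⟩ ⟨k', σ'⟩ h
    have hh : ∀ r, k.succAbove (σ r) = k'.succAbove (σ' r) := fun r => congrFun h r
    have hk : k = k' := by
      by_contra hne
      obtain ⟨i, hi⟩ := Fin.exists_succAbove_eq (Ne.symm hne)
      have := hh (σ.symm i)
      simp only [Equiv.apply_symm_apply, hi] at this
      exact Fin.succAbove_ne _ _ this.symm
    subst hk
    have : σ = σ' := Equiv.ext fun r => Fin.succAbove_right_injective (hh r)
    rw [this]
  · intro I hI
    by_cases hinj : Function.Injective I
    · exfalso
      apply hI
      have : ¬ Function.Surjective I := by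
        intro hs
        have := Fintype.card_le_of_surjective I hs
        simp at this
      rw [Function.Surjective] at this
      push Not at this
      obtain ⟨k, hk⟩ := this
      choose σ hσ using fun r => Fin.exists_succAbove_eq (hk r)
      have hσi : Function.Injective σ := by
        intro x y hxy
        apply hinj
        rw [← hσ x, ← hσ y, hxy]
      exact ⟨(k, Equiv.ofBijective σ (Finite.injective_iff_bijective.1 hσi)), by
        funext r; simp [hσ]⟩
    · simp only [Function.Injective] at hinj
      push Not at hinj
      obtain ⟨x, y, hxy, hne⟩ := hinj
      rw [Finset.prod_mul_distrib]
      have : ∏ r, u (I r) = 0 := by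
        rw [← Finset.mul_prod_erase _ _ (Finset.mem_univ x),
          ← Finset.mul_prod_erase _ _ (Finset.mem_erase.2 ⟨Ne.symm hne, Finset.mem_univ y⟩),
          ← mul_assoc, hxy, hu, zero_mul]
      rw [this, mul_zero]
  · intro p; rfl

lemma row_rel15 (n : ℕ) (r : Fin n) : ∑ j, genMat15 n r j * Xdet15 n j = 0 := by
  let B : Matrix (Fin (n + 1)) (Fin (n + 1)) (MvPolynomial (Fin n × Fin (n + 1)) (ZMod 2)) :=
    Matrix.of (Fin.cons (genMat15 n r) (genMat15 n))
  have h0 : B.det = 0 :=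
    Matrix.det_zero_of_row_eq (i := 0) (j := r.succ) (Fin.succ_ne_zero r).symm (by
      change (Fin.cons (genMat15 n r) (genMat15 n) : Fin (n + 1) → Fin (n + 1) → _) 0 =
        (Fin.cons (genMat15 n r) (genMat15 n) : Fin (n + 1) → Fin (n + 1) → _) r.succ
      rfl)
  rw [Matrix.det_succ_row_zero] at h0
  rw [← h0]
  refine Finset.sum_congr rfl fun j _ => ?_
  rw [CharTwo.neg_eq, one_pow, one_mul]
  congr 1

lemma prod_single15 {R G ι : Type*} [CommRing R] [AddCommMonoid G] (s : Finset ι)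
    (g : ι → G) (c : ι → R) :
    ∏ i ∈ s, (AddMonoidAlgebra.single (g i) (c i) : AddMonoidAlgebra R G) =
      AddMonoidAlgebra.single (∑ i ∈ s, g i) (∏ i ∈ s, c i) := by
  classical
  induction s using Finset.induction_on with
  | empty => simp [AddMonoidAlgebra.one_def]
  | insert a s ha ih => 
    rw [Finset.prod_insert ha, Finset.prod_insert ha, Finset.sum_insert ha, ih,
      AddMonoidAlgebra.single_mul_single]

lemma coeff_sum15 {R G ι : Type*} [CommRing R] [AddCommMonoid G] [DecidableEq G] (s : Finset ι)
    (g : ι → G) (c : ι → R) (T : G) :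
    (∑ i ∈ s, (AddMonoidAlgebra.single (g i) (c i) : AddMonoidAlgebra R G)).coeff T =
      ∑ i ∈ s, if g i = T then c i else 0 := by
  simp [AddMonoidAlgebra.coeff_sum, Finsupp.finsetSum_apply,
    AddMonoidAlgebra.coeff_single, Finsupp.single_apply]

lemma coeff_sum15' {R G ι : Type*} [CommRing R] [AddCommMonoid G] (s : Finset ι)
    (f : ι → AddMonoidAlgebra R G) (T : G) :
    (∑ i ∈ s, f i).coeff T = ∑ i ∈ s, (f i).coeff T := by
  simp [AddMonoidAlgebra.coeff_sum, Finsupp.finsetSum_apply]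

lemma key15 (n : ℕ) (T : Fin (n + 1) → ZMod 2) (hT : ∑ j, (1 + T j) = 1) :
    ∑ I : Fin n → Fin (n + 1), (if ∑ r, Pi.single (I r) (1 : ZMod 2) = T then
      ∏ r, (X (r, I r) * Xdet15 n (I r)) else 0) = ∏ j, Xdet15 n j := by
  classical
  let R := MvPolynomial (Fin n × Fin (n + 1)) (ZMod 2)
  let G := Fin (n + 1) → ZMod 2
  let S := AddMonoidAlgebra R G
  let C' : R →+* S := AddMonoidAlgebra.singleZeroRingHom
  have hC' : ∀ x, C' x = AddMonoidAlgebra.single 0 x := fun x => rfl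
  have : CharP S 2 := charP_of_injective_ringHom (f := C')
    (fun x y h => by
      have := congrArg (fun z : S => z.coeff 0) h
      simpa [hC'] using this) 2
  let t : Fin (n + 1) → S := fun j => AddMonoidAlgebra.single (Pi.single j 1) 1
  have ht : ∀ j, t j * t j = 1 := by
    intro j
    simp only [t]
    rw [AddMonoidAlgebra.single_mul_single, CharTwo.add_self_eq_zero, one_mul]
    rfl
  have hE := perm_expand15 n ((genMat15 n).map C') (fun j => C' (Xdet15 n j) * (1 + t j)) (by
    intro j
    have : (1 + t j) * (1 + t j) = 0 := by
      have h2 : (1 + t j) * (1 + t j) = (1 + 1) + (t j + t j) := by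
        rw [add_mul, mul_add, mul_add, ht]; ring
      rw [h2, CharTwo.add_self_eq_zero, CharTwo.add_self_eq_zero, add_zero]
    rw [mul_mul_mul_comm, this, mul_zero])
  have hL : ∀ r, ∑ j, (genMat15 n).map C' r j * (C' (Xdet15 n j) * (1 + t j)) =
      ∑ j, (AddMonoidAlgebra.single (Pi.single j 1) (X (r, j) * Xdet15 n j) : S) := by
    intro r
    have h0 : ∑ j, C' (X (r, j) * Xdet15 n j) = 0 := by
      rw [← map_sum]
      exact (congrArg C' (row_rel15 n r)).trans (map_zero C')
    have : ∀ j, (genMat15 n).map C' r j * (C' (Xdet15 n j) * (1 + t j)) =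
        C' (X (r, j) * Xdet15 n j) +
        (AddMonoidAlgebra.single (Pi.single j 1) (X (r, j) * Xdet15 n j) : S) := by
      intro j
      have hX : (genMat15 n).map C' r j = C' (X (r, j)) := rfl
      rw [hX, ← mul_assoc, ← map_mul, mul_add, mul_one]
      congr 1
      simp only [t, hC']
      rw [AddMonoidAlgebra.single_mul_single, zero_add, mul_one]
    simp_rw [this]
    rw [Finset.sum_add_distrib, h0, zero_add]
  rw [Finset.prod_congr rfl (fun r _ => hL r), Finset.prod_univ_sum, Fintype.piFinset_univ,
    Finset.sum_congr rfl (fun I _ => prod_single15 Finset.univ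
      (fun r : Fin n => (Pi.single (I r) 1 : G)) (fun r => X (r, I r) * Xdet15 n (I r)))]
    at hE
  have hR : ∀ k : Fin (n + 1), (((genMat15 n).map C').submatrix id k.succAbove).det *
      ∏ i, (C' (Xdet15 n (k.succAbove i)) * (1 + t (k.succAbove i))) =
      ∑ s ∈ (Finset.univ.erase k).powerset,
        (AddMonoidAlgebra.single (∑ j ∈ s, Pi.single j 1) (∏ j, Xdet15 n j) : S) := by
    intro k
    have h1 : (((genMat15 n).map C').submatrix id k.succAbove).det = C' (Xdet15 n k) := by
      rw [Xdet15, RingHom.map_det]; rfl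
    have h2 : ∏ i, (1 + t (k.succAbove i)) = ∏ j ∈ Finset.univ.erase k, (1 + t j) := by
      have : Finset.univ.erase k = Finset.univ.map k.succAboveEmb := by
        ext j
        simp only [Finset.mem_erase, Finset.mem_univ, and_true, Finset.mem_map, true_and]
        exact (Fin.exists_succAbove_eq_iff).symm
      rw [this, Finset.prod_map]; rfl
    rw [h1, Finset.prod_mul_distrib, h2, ← mul_assoc, ← map_prod, ← map_mul,
      ← Fin.prod_univ_succAbove (fun j => Xdet15 n j) k, Finset.prod_one_add, Finset.mul_sum]
    refine Finset.sum_congr rfl fun s _ => ?_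
    simp only [t]
    rw [prod_single15, hC', AddMonoidAlgebra.single_mul_single, zero_add, Finset.prod_const_one,
      mul_one]
  rw [Finset.sum_congr rfl (fun k _ => hR k)] at hE
  have hc := congrArg (fun x : S => x.coeff T) hE
  have hc2 := (coeff_sum15 _ _ _ T).symm.trans (hc.trans ((coeff_sum15' _ _ T).trans
    (Finset.sum_congr rfl fun k _ => coeff_sum15 _ _ _ T)))
  refine hc2.trans ?_
  have hz : ∀ a : ZMod 2, a = 0 ∨ a = 1 := by decide
  have hs : ∀ s : Finset (Fin (n + 1)), (∑ j ∈ s, Pi.single j (1 : ZMod 2) = T) ↔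
      s = Finset.univ.filter (fun j => T j = 1) := by
    intro s
    have : ∑ j ∈ s, Pi.single j (1 : ZMod 2) = fun j => if j ∈ s then (1 : ZMod 2) else 0 := by
      funext j
      simp [Finset.sum_apply, Pi.single_apply]
    rw [this]
    constructor
    · intro h
      ext j
      rw [← h]
      simp
    · rintro rfl
      funext j
      rcases hz (T j) with h | h <;> simp [h]
  simp_rw [hs, Finset.sum_ite_eq']
  have hk : ∀ k : Fin (n + 1), (if Finset.univ.filter (fun j => T j = 1) ∈
      (Finset.univ.erase k).powerset then ∏ j, Xdet15 n j else 0) =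
      C (1 + T k) * ∏ j, Xdet15 n j := by
    intro k
    have : Finset.univ.filter (fun j => T j = 1) ∈ (Finset.univ.erase k).powerset ↔ T k ≠ 1 := by
      simp [Finset.subset_erase]
    simp only [this]
    rcases hz (T k) with h | h
    · simp [h]
    · have : (1 : ZMod 2) + 1 = 0 := by decide
      rw [h, this]; simp
  simp_rw [hk]
  rw [← Finset.sum_mul, ← map_sum, hT, map_one, one_mul]

lemma pderiv_sq15 {σ : Type*} (v : σ) (g h : MvPolynomial σ (ZMod 2)) :
    pderiv v (g ^ 2 * h) = g ^ 2 * pderiv v h := by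
  rw [pderiv_mul, pderiv_pow]
  have : ((2 : ℕ) : MvPolynomial σ (ZMod 2)) = 0 := CharP.cast_eq_zero _ 2
  rw [this]; simp

lemma foldr_sq15 {σ : Type*} (l : List σ) (g h : MvPolynomial σ (ZMod 2)) :
    l.foldr (fun v g => pderiv v g) (g ^ 2 * h) =
      g ^ 2 * l.foldr (fun v g => pderiv v g) h := by
  induction l with
  | nil => rfl
  | cons a l ih => rw [List.foldr_cons, List.foldr_cons, ih, pderiv_sq15]

lemma foldr_sum15 {σ ι : Type*} (l : List σ) (s : Finset ι) (f : ι → MvPolynomial σ (ZMod 2)) :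
    l.foldr (fun v g => pderiv v g) (∑ i ∈ s, f i) =
      ∑ i ∈ s, l.foldr (fun v g => pderiv v g) (f i) := by
  induction l with
  | nil => rfl
  | cons a l ih => simp only [List.foldr_cons]; rw [ih, map_sum]

lemma pderiv_prod15 (n : ℕ) (I I' : Fin n → Fin (n + 1)) (s : Finset (Fin n)) (r : Fin n)
    (hr : r ∈ s) :
    pderiv (r, I r) (∏ q ∈ s, (X (q, I' q) : MvPolynomial (Fin n × Fin (n + 1)) (ZMod 2))) =
      if I r = I' r then ∏ q ∈ s.erase r, X (q, I' q) else 0 := by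
  have hz : pderiv (r, I r) (∏ q ∈ s.erase r,
      (X (q, I' q) : MvPolynomial (Fin n × Fin (n + 1)) (ZMod 2))) = 0 := by
    have : ∀ t : Finset (Fin n), r ∉ t → pderiv (r, I r) (∏ q ∈ t,
      (X (q, I' q) : MvPolynomial (Fin n × Fin (n + 1)) (ZMod 2))) = 0 := by
      intro t
      induction t using Finset.induction_on with
      | empty => intro _; rw [Finset.prod_empty, pderiv_one]
      | insert a t ha ih =>
        intro hr'
        rw [Finset.mem_insert, not_or] at hr'
        rw [Finset.prod_insert ha, pderiv_mul, ih hr'.2, mul_zero, add_zero, pderiv_X_of_ne,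
          zero_mul]
        intro h
        exact hr'.1 (congrArg Prod.fst h).symm
    exact this _ (Finset.notMem_erase r s)
  rw [← Finset.mul_prod_erase _ _ hr, pderiv_mul, hz, mul_zero, add_zero]
  split_ifs with h
  · rw [h, pderiv_X_self, one_mul]
  · rw [pderiv_X_of_ne, zero_mul]
    intro h'
    exact h (congrArg Prod.snd h').symm

lemma foldr_mono15 (n : ℕ) (I I' : Fin n → Fin (n + 1)) (l : List (Fin n)) (hl : l.Nodup) :
    (l.map fun r => (r, I r)).foldr (fun v g => pderiv v g)
      (∏ q, (X (q, I' q) : MvPolynomial (Fin n × Fin (n + 1)) (ZMod 2))) =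
      if ∀ r ∈ l, I r = I' r then ∏ q ∈ Finset.univ \ l.toFinset, X (q, I' q) else 0 := by
  induction l with
  | nil => simp
  | cons a l ih =>
    rw [List.nodup_cons] at hl
    rw [List.map_cons, List.foldr_cons, ih hl.2]
    by_cases h : ∀ r ∈ l, I r = I' r
    · rw [if_pos h, pderiv_prod15 _ _ _ _ _ (by simpa using hl.1)]
      have : (Finset.univ \ l.toFinset).erase a = Finset.univ \ (a :: l).toFinset := by
        ext q; simp
      rw [this]
      by_cases ha : I a = I' a
      · rw [if_pos ha, if_pos]
        simpa [ha] using h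
      · rw [if_neg ha, if_neg]
        simp [ha]
    · rw [if_neg h, if_neg, map_zero]
      intro h'
      exact h fun r hr => h' r (List.mem_cons_of_mem _ hr)

lemma pderivI_mono15 (n : ℕ) (I I' : Fin n → Fin (n + 1)) :
    pderivI15 n I (∏ q, X (q, I' q)) = if I' = I then 1 else 0 := by
  rw [pderivI15, List.ofFn_eq_map, foldr_mono15 _ _ _ _ (List.nodup_finRange n)]
  have : (∀ r ∈ List.finRange n, I r = I' r) ↔ I' = I := by
    simp [funext_iff, eq_comm]
  simp only [this]
  have h2 : Finset.univ \ (List.finRange n).toFinset = ∅ := by ext; simp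
  rw [h2, Finset.prod_empty]

/-- specialization used to read off parities -/
lemma spec15 (n : ℕ) (j : Fin (n + 1)) :
    ∃ φ : MvPolynomial (Fin n × Fin (n + 1)) (ZMod 2) →+* Polynomial (ZMod 2),
      ∀ k, φ (Xdet15 n k) = if k = j then 1 else Polynomial.X := by
  let M : Matrix (Fin n) (Fin (n + 1)) (Polynomial (ZMod 2)) := fun i =>
    j.insertNth Polynomial.X (fun i' => if i = i' then 1 else 0)
  have hMj : ∀ i, M i j = Polynomial.X := fun i => by simp [M]
  have hMs : ∀ i i', M i (j.succAbove i') = if i = i' then 1 else 0 := fun i i' => by simp [M]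
  let φ : MvPolynomial (Fin n × Fin (n + 1)) (ZMod 2) →+* Polynomial (ZMod 2) :=
    (aeval fun p => M p.1 p.2 : _ →ₐ[ZMod 2] Polynomial (ZMod 2)).toRingHom
  have hφ : ∀ i k, φ (genMat15 n i k) = M i k := fun i k => by
    simp [φ, genMat15]
  have h1 : φ (Xdet15 n j) = 1 := by
    rw [Xdet15, RingHom.map_det, ← Matrix.det_one (n := Fin n)]
    congr 1
    ext1 a b
    rw [RingHom.mapMatrix_apply, Matrix.map_apply, Matrix.submatrix_apply, hφ, id, hMs,
      Matrix.one_apply]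
  refine ⟨φ, fun k => ?_⟩
  split_ifs with hk
  · rw [hk, h1]
  · obtain ⟨i, rfl⟩ := Fin.exists_succAbove_eq hk
    have h2 := congrArg φ (row_rel15 n i)
    rw [map_zero, map_sum, Fin.sum_univ_succAbove _ j] at h2
    simp only [map_mul, hφ, hMj, hMs, h1, ite_mul, zero_mul, one_mul, mul_one, Finset.sum_ite_eq,
      Finset.mem_univ, if_true] at h2
    exact (CharTwo.add_eq_zero.1 h2).symm

lemma Xdet_ne15 (n : ℕ) (j : Fin (n + 1)) : Xdet15 n j ≠ 0 := by
  obtain ⟨φ, h⟩ := spec15 n j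
  intro h0
  have := h j
  rw [h0] at this
  simp at this

lemma half15 {α : Type*} [Fintype α] [DecidableEq α] (K : Multiset α)
    (h : ∀ j, Odd (K.count j)) : ∃ L : Multiset α, K = 2 • L + Finset.univ.val := by
  refine ⟨∑ j, (K.count j / 2) • {j}, ?_⟩
  ext j
  have h1 : Multiset.count j (∑ i, (K.count i / 2) • ({i} : Multiset α)) = K.count j / 2 := by
    rw [Multiset.count_sum']
    simp [Multiset.count_singleton]
  have h2 : Multiset.count j (Finset.univ : Finset α).val = 1 :=
    Multiset.count_eq_one_of_mem Finset.univ.nodup (Finset.mem_univ j)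
  rw [Multiset.count_add, Multiset.count_nsmul, h1, h2]
  obtain ⟨m, hm⟩ := h j
  omega

lemma XProd_add15 (n : ℕ) (J K : Multiset (Fin (n + 1))) :
    XProd15 n (J + K) = XProd15 n J * XProd15 n K := by
  simp [XProd15]

lemma XProd_two15 (n : ℕ) (J : Multiset (Fin (n + 1))) :
    XProd15 n (2 • J) = XProd15 n J ^ 2 := by
  rw [two_nsmul, XProd_add15, sq]

lemma XProd_I15 (n : ℕ) (I : Fin n → Fin (n + 1)) :
    XProd15 n (Finset.univ.val.map I) = ∏ r, Xdet15 n (I r) := by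
  rw [XProd15, Multiset.map_map]; rfl

lemma XProd_univ15 (n : ℕ) :
    XProd15 n Finset.univ.val = ∏ r, Xdet15 n r := rfl

lemma phi_XProd15 (n : ℕ) (j : Fin (n + 1))
    (φ : MvPolynomial (Fin n × Fin (n + 1)) (ZMod 2) →+* Polynomial (ZMod 2))
    (h : ∀ k, φ (Xdet15 n k) = if k = j then 1 else Polynomial.X) (K : Multiset (Fin (n + 1))) :
    ∃ d, φ (XProd15 n K) = Polynomial.X ^ d ∧ d + K.count j = K.card := by
  induction K using Multiset.induction_on with
  | empty => exact ⟨0, by simp [XProd15]⟩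
  | cons a K ih =>
    obtain ⟨d, hd, hd'⟩ := ih
    have : XProd15 n (a ::ₘ K) = Xdet15 n a * XProd15 n K := by simp [XProd15]
    rw [this, map_mul, h, hd]
    by_cases ha : a = j
    · refine ⟨d, by simp [ha], ?_⟩
      rw [ha, Multiset.count_cons_self, Multiset.card_cons]; omega
    · refine ⟨d + 1, by simp [ha, pow_succ'], ?_⟩
      rw [Multiset.count_cons_of_ne (Ne.symm ha), Multiset.card_cons]; omega

lemma parity15 (n : ℕ) (I : Fin n → Fin (n + 1)) (J L : Multiset (Fin (n + 1)))
    (hJ : Odd (Multiset.card J))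
    (h : (∏ r : Fin n, Xdet15 n (I r)) * XProd15 n J =
        (XProd15 n L) ^ 2 * ∏ j : Fin (n + 1), Xdet15 n j) (j : Fin (n + 1)) :
    Odd ((Finset.univ.val.map I + J).count j) := by
  obtain ⟨φ, hφ⟩ := spec15 n j
  rw [← XProd_I15, ← XProd_add15, ← XProd_univ15, ← XProd_two15, ← XProd_add15] at h
  obtain ⟨d, hd, hd'⟩ := phi_XProd15 n j φ hφ (Finset.univ.val.map I + J)
  obtain ⟨e, he, he'⟩ := phi_XProd15 n j φ hφ (2 • L + Finset.univ.val)
  rw [h, he] at hd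
  have hde : e = d := by
    have := congrArg Polynomial.natDegree hd
    simpa using this
  have h2 : Multiset.count j (Finset.univ : Finset (Fin (n + 1))).val = 1 :=
    Multiset.count_eq_one_of_mem Finset.univ.nodup (Finset.mem_univ j)
  rw [Multiset.count_add j (2 • L), h2, Multiset.count_nsmul] at he'
  simp only [Multiset.card_add, Multiset.card_nsmul, Multiset.card_map, Finset.card_val,
    Finset.card_univ, Fintype.card_fin] at hd' he'
  obtain ⟨m, hm⟩ := hJ
  rw [Nat.odd_iff]
  omega

lemma cond15 (n : ℕ) (I : Fin n → Fin (n + 1)) (J : Multiset (Fin (n + 1))) :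
    (∑ r, Pi.single (I r) (1 : ZMod 2) = fun j => 1 + (J.count j : ZMod 2)) ↔
      ∀ j, Odd ((Finset.univ.val.map I + J).count j) := by
  rw [funext_iff]
  refine forall_congr' fun j => ?_
  have h1 : (∑ r, Pi.single (I r) (1 : ZMod 2) : Fin (n + 1) → ZMod 2) j =
      ((Finset.univ.val.map I).count j : ZMod 2) := by
    rw [Finset.sum_apply, Multiset.count_map]
    simp [Pi.single_apply, Finset.sum_boole, Finset.card]
  rw [h1, Multiset.count_add, ← ZMod.natCast_eq_one_iff_odd, Nat.cast_add]
  generalize (Multiset.count j (Finset.univ.val.map I) : ZMod 2) = a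
  generalize (Multiset.count j J : ZMod 2) = b
  revert a b
  decide

/-- Papadakis–Petrotou determinant identity over `𝔽₂`:
for `I` with `n` components and `J` of odd length, if
`X_I · X_J = X_L² · X_0 X_1 ⋯ X_n` then `∂_I X_J = X_L²`, and if no such `L` exists,
then `∂_I X_J = 0`. -/
theorem stmt_15 (n : ℕ) (I : Fin n → Fin (n + 1)) (J : Multiset (Fin (n + 1)))
    (hJ : Odd (Multiset.card J)) :
    (∀ L : Multiset (Fin (n + 1)),
      (∏ r : Fin n, Xdet15 n (I r)) * XProd15 n J =
        (XProd15 n L) ^ 2 * ∏ j : Fin (n + 1), Xdet15 n j →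
      pderivI15 n I (XProd15 n J) = (XProd15 n L) ^ 2) ∧
    ((¬ ∃ L : Multiset (Fin (n + 1)),
      (∏ r : Fin n, Xdet15 n (I r)) * XProd15 n J =
        (XProd15 n L) ^ 2 * ∏ j : Fin (n + 1), Xdet15 n j) →
      pderivI15 n I (XProd15 n J) = 0) := by

  classical
  have hP : (∏ j : Fin (n + 1), Xdet15 n j) ≠ 0 :=
    Finset.prod_ne_zero_iff.2 fun j _ => Xdet_ne15 n j
  -- canonical choice of `L`
  have hLex : ∀ I' : Fin n → Fin (n + 1), ∃ L : Multiset (Fin (n + 1)),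
      (∀ j, Odd ((Finset.univ.val.map I' + J).count j)) →
      (∏ r : Fin n, Xdet15 n (I' r)) * XProd15 n J =
        (XProd15 n L) ^ 2 * ∏ j : Fin (n + 1), Xdet15 n j := by
    intro I'
    by_cases h : ∀ j, Odd ((Finset.univ.val.map I' + J).count j)
    · obtain ⟨L, hL⟩ := half15 _ h
      refine ⟨L, fun _ => ?_⟩
      rw [← XProd_I15, ← XProd_add15, ← XProd_univ15, ← XProd_two15, ← XProd_add15, hL]
    · exact ⟨0, fun h' => absurd h' h⟩
  choose Lc hLc using hLex
  have hT : ∑ j, (1 + (1 + (J.count j : ZMod 2))) = 1 := by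
    have h1 : ∀ b : ZMod 2, 1 + (1 + b) = b := by decide
    simp_rw [h1]
    rw [← Nat.cast_sum]
    have : ∑ j, J.count j = J.card := Multiset.sum_count_eq_card (fun a _ => Finset.mem_univ a)
    rw [this, ZMod.natCast_eq_one_iff_odd]
    exact hJ
  have hkey := key15 n (fun j => 1 + (J.count j : ZMod 2)) hT
  have hexp : XProd15 n J = ∑ I' : Fin n → Fin (n + 1),
      (if ∀ j, Odd ((Finset.univ.val.map I' + J).count j) then XProd15 n (Lc I') else 0) ^ 2 *
        ∏ r, X (r, I' r) := by
    apply mul_right_cancel₀ hP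
    nth_rw 1 [← hkey]
    rw [Finset.mul_sum, Finset.sum_mul]
    refine Finset.sum_congr rfl fun I' _ => ?_
    by_cases h : ∀ j, Odd ((Finset.univ.val.map I' + J).count j)
    · rw [if_pos ((cond15 n I' J).2 h), if_pos h, Finset.prod_mul_distrib]
      have h3 := hLc I' h
      linear_combination (∏ r, X (r, I' r)) * h3
    · rw [if_neg (fun h' => h ((cond15 n I' J).1 h')), if_neg h]
      ring
  have hmain : pderivI15 n I (XProd15 n J) =
      (if ∀ j, Odd ((Finset.univ.val.map I + J).count j) then XProd15 n (Lc I) else 0) ^ 2 := by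
    rw [hexp, pderivI15, foldr_sum15]
    simp_rw [foldr_sq15]
    have := pderivI_mono15 n I
    simp only [pderivI15] at this
    simp_rw [this]
    simp
  rw [hmain]
  constructor
  · intro L hL
    have h := parity15 n I J L hJ hL
    rw [if_pos h]
    have := hLc I h
    rw [hL] at this
    exact (mul_right_cancel₀ hP this).symm
  · intro hno
    rw [if_neg, zero_pow two_ne_zero]
    intro h
    exact hno ⟨_, hLc I h⟩
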